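/- Enlarging a hierarchical constellation does not decrease the high-priority BICM rate: for every ρ ≥ 1 and noise variance σ_H² > 0, r_H(ρμ, σ_H²) ≥ r_H(μ, σ_H²), where ρμ is the constellation obtained by multiplying every point of μ by ρ; that is, Σ_{i=1}^{m_H} I(B_H^i ; ρZ + N_H) ≥ Σ_{i=1}^{m_H} I(B_H^i ; Z + N_H). -/

import Mathlib

open MeasureTheory ProbabilityTheory
open scoped ENNReal NNReal

/-- The centered complex Gaussian law of variance `v`: real and imaginary parts are independent
centered real Gaussians of variance `v/2`. -/
noncomputable def complexGaussian (v : ℝ≥0) : Measure ℂ :=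
  ((gaussianReal 0 (v / 2)).prod (gaussianReal 0 (v / 2))).map
    (fun p => (p.1 : ℂ) + (p.2 : ℂ) * Complex.I)

/-- Kullback-Leibler divergence in base 2 (in bits). -/
noncomputable def klDiv2 {α : Type*} [MeasurableSpace α] (μ ν : Measure α) : ℝ :=
  ∫ x, Real.logb 2 ((μ.rnDeriv ν x).toReal) ∂μ

/-- Mutual information (base 2) of two random variables: KL divergence of the joint law from
the product of the marginal laws. -/
noncomputable def mutualInfo {Ω α β : Type*} [MeasurableSpace Ω] [MeasurableSpace α]
    [MeasurableSpace β] (P : Measure Ω) (X : Ω → α) (Y : Ω → β) : ℝ :=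
  klDiv2 (P.map fun ω => (X ω, Y ω)) ((P.map X).prod (P.map Y))

/-- Conditional mutual information given a finite-valued random variable `B`:
`I(X;Y|B) = ∑ b, P(B = b) · I(X;Y)` computed under the conditional measure `P[|B = b]`. -/
noncomputable def condMutualInfo {Ω α β γ : Type*} [MeasurableSpace Ω] [MeasurableSpace α]
    [MeasurableSpace β] [MeasurableSpace γ] [Fintype γ] (P : Measure Ω) (X : Ω → α) (Y : Ω → β)
    (B : Ω → γ) : ℝ :=
  ∑ b : γ, (P (B ⁻¹' {b})).toReal * mutualInfo (P[|B ⁻¹' {b}]) X Y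

/-!
Monotonicity of mutual information in the channel gain. Any channel with the smaller gain `a` is a
degraded version of the channel with the larger gain `c`: scaling the output `c * z + N` by
`r = a / c` gives `a * z + r * N`, whose noise has variance `‖r‖ ^ 2 * v ≤ v`, and an independent
Gaussian noise of variance `(1 - ‖r‖ ^ 2) * v` restores the variance `v`. The data processing
inequality then compares the two mutual informations. It is available for the `ℝ≥0∞`-valued
Kullback-Leibler divergence, whereas `klDiv2` is a Bochner integral; the two agree up to the factor
`log 2` when the joint law is dominated by a multiple of the product of its marginals, which holds
because the input takes finitely many values.
-/

open InformationTheory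

section MutualInformation

variable {α β γ : Type*} [MeasurableSpace α] [MeasurableSpace β] [MeasurableSpace γ]

/-- The mutual information, in nats, of two random variables with joint law `J`. It is a functional
of the joint law with values in `ℝ≥0∞`, so that data processing needs no integrability. -/
noncomputable def klMutualInfo (J : Measure (α × β)) : ℝ≥0∞ :=
  klDiv J (J.fst.prod J.snd)

lemma fst_id_parallelComp_comp (J : Measure (α × β)) (κ : Kernel β γ) [IsMarkovKernel κ] :
    ((Kernel.id ∥ₖ κ) ∘ₘ J).fst = J.fst := by
  rw [Measure.fst, Measure.fst, Measure.map_comp _ _ measurable_fst,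
    ← Measure.deterministic_comp_eq_map measurable_fst]
  congr 1
  ext1 p
  rw [Kernel.map_apply _ measurable_fst, Kernel.parallelComp_apply, Kernel.deterministic_apply]
  exact Measure.fst_prod

lemma snd_id_parallelComp_comp (J : Measure (α × β)) (κ : Kernel β γ) [IsSFiniteKernel κ] :
    ((Kernel.id ∥ₖ κ) ∘ₘ J).snd = κ ∘ₘ J.snd := by
  rw [Measure.snd, Measure.snd, Measure.map_comp _ _ measurable_snd,
    ← Measure.deterministic_comp_eq_map measurable_snd, Measure.comp_assoc]
  congr 1
  ext1 p
  rw [Kernel.map_apply _ measurable_snd, Kernel.parallelComp_apply,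
    Kernel.comp_deterministic_eq_comap, Kernel.comap_apply]
  exact Measure.snd_prod

lemma klMutualInfo_id_parallelComp_comp_le (J : Measure (α × β)) [IsFiniteMeasure J]
    (κ : Kernel β γ) [IsMarkovKernel κ] :
    klMutualInfo ((Kernel.id ∥ₖ κ) ∘ₘ J) ≤ klMutualInfo J := by
  rw [klMutualInfo, fst_id_parallelComp_comp, snd_id_parallelComp_comp, Measure.prod_comp_right]
  exact klDiv_comp_right_le J (J.fst.prod J.snd) (Kernel.id ∥ₖ κ)

lemma klDiv_ne_top_of_le_smul {μ ν : Measure α} [IsFiniteMeasure μ] [IsFiniteMeasure ν] {C : ℝ≥0}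
    (h : μ ≤ C • ν) : klDiv μ ν ≠ ∞ := by
  have hac : μ ≪ ν := Measure.absolutelyContinuous_of_le_smul (c := C) h
  have rnDeriv_le : μ.rnDeriv ν ≤ᵐ[ν] fun _ ↦ (C : ℝ≥0∞) :=
    ae_le_of_forall_setLIntegral_le_of_sigmaFinite (Measure.measurable_rnDeriv _ _) fun s _ _ ↦
      (Measure.setLIntegral_rnDeriv_le s).trans (by simpa using h s)
  obtain ⟨M, hM⟩ := (isCompact_Icc (a := (0 : ℝ)) (b := C)).exists_bound_of_continuousOn
    continuous_klFun.continuousOn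
  refine klDiv_ne_top hac ((integrable_klFun_rnDeriv_iff hac).1 (.of_bound (C := M) ?_ ?_))
  · have := Measure.measurable_rnDeriv μ ν
    exact Measurable.aestronglyMeasurable (by fun_prop)
  · filter_upwards [rnDeriv_le] with x hx
    exact hM _ ⟨ENNReal.toReal_nonneg, ENNReal.toReal_le_coe_of_le_coe hx⟩

lemma exists_le_smul_fst_prod_snd [Finite α] [MeasurableSingletonClass α] (J : Measure (α × β))
    [IsFiniteMeasure J] : ∃ C : ℝ≥0, J ≤ C • J.fst.prod J.snd := by
  have := Fintype.ofFinite α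
  -- Null points get `C a = 0`, as `toNNReal` sends `∞` to `0`.
  let C (a : α) : ℝ≥0 := (J.fst {a})⁻¹.toNNReal
  have slice_le (a : α) (A : Set (α × β)) (hA : MeasurableSet A) :
      J (({a} ×ˢ Set.univ) ∩ A) ≤ C a * J.fst.prod J.snd A := by
    have fst_singleton : J ({a} ×ˢ Set.univ) = J.fst {a} := by
      rw [Measure.fst_apply (.singleton a), Set.prod_univ]
    by_cases ha : J.fst {a} = 0
    · rw [measure_inter_null_of_null_left _ (fst_singleton.trans ha)]
      exact zero_le
    let s := Prod.mk a ⁻¹' A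
    have hs : MeasurableSet s := measurable_prodMk_left hA
    calc J (({a} ×ˢ Set.univ) ∩ A) ≤ J.snd s := by
          rw [Measure.snd_apply hs]
          refine measure_mono fun p ⟨hp, hpA⟩ ↦ ?_
          obtain ⟨rfl, -⟩ := hp
          exact hpA
      _ = C a * J.fst.prod J.snd ({a} ×ˢ s) := by
          rw [Measure.prod_prod, ENNReal.coe_toNNReal (ENNReal.inv_ne_top.2 ha), ← mul_assoc,
            ENNReal.inv_mul_cancel ha (measure_ne_top _ _), one_mul]
      _ ≤ C a * J.fst.prod J.snd A := by
          gcongr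
          rintro p ⟨rfl, hp⟩
          exact hp
  refine ⟨∑ a, C a, Measure.le_iff.2 fun A hA ↦ ?_⟩
  calc J A = J (⋃ a, ({a} ×ˢ Set.univ) ∩ A) := by
        congr 1; ext ⟨a, b⟩; simp
    _ ≤ ∑ a, J (({a} ×ˢ Set.univ) ∩ A) := measure_iUnion_fintype_le _ _
    _ ≤ ∑ a, C a * J.fst.prod J.snd A := Finset.sum_le_sum fun a _ ↦ slice_le a A hA
    _ = ((∑ a, C a) • J.fst.prod J.snd) A := by simp [Finset.sum_mul, ENNReal.smul_def]

lemma klMutualInfo_ne_top [Finite α] [MeasurableSingletonClass α] (J : Measure (α × β))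
    [IsFiniteMeasure J] : klMutualInfo J ≠ ∞ :=
  have ⟨_, hC⟩ := exists_le_smul_fst_prod_snd J
  klDiv_ne_top_of_le_smul hC

lemma klDiv2_eq_toReal_klDiv_div_log {μ ν : Measure α} [IsFiniteMeasure μ] [IsFiniteMeasure ν]
    (hac : μ ≪ ν) (h_univ : μ Set.univ = ν Set.univ) :
    klDiv2 μ ν = (klDiv μ ν).toReal / Real.log 2 := by
  rw [toReal_klDiv_of_measure_eq hac h_univ, klDiv2, ← integral_div]
  rfl

variable {Ω : Type*} [MeasurableSpace Ω] {P : Measure Ω} [IsProbabilityMeasure P]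
  {X : Ω → α} {Y : Ω → β} {Y' : Ω → γ}

lemma mutualInfo_eq_toReal_klMutualInfo_div_log [Finite α] [MeasurableSingletonClass α]
    (hX : Measurable X) (hY : Measurable Y) :
    mutualInfo P X Y = (klMutualInfo (P.map fun ω ↦ (X ω, Y ω))).toReal / Real.log 2 := by
  let J := P.map fun ω ↦ (X ω, Y ω)
  have : IsProbabilityMeasure J := Measure.isProbabilityMeasure_map (by fun_prop)
  have ⟨_, hC⟩ := exists_le_smul_fst_prod_snd J
  have hac : J ≪ J.fst.prod J.snd := Measure.absolutelyContinuous_of_le_smul hC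
  calc mutualInfo P X Y = klDiv2 J (J.fst.prod J.snd) := by
        rw [mutualInfo, Measure.fst_map_prodMk hY, Measure.snd_map_prodMk hX]
    _ = (klMutualInfo J).toReal / Real.log 2 := klDiv2_eq_toReal_klDiv_div_log hac (by simp)

lemma mutualInfo_le_of_map_prodMk_eq_comp [Finite α] [MeasurableSingletonClass α]
    (hX : Measurable X) (hY : Measurable Y) (hY' : Measurable Y') (κ : Kernel β γ)
    [IsMarkovKernel κ]
    (h : P.map (fun ω ↦ (X ω, Y' ω)) = (Kernel.id ∥ₖ κ) ∘ₘ P.map fun ω ↦ (X ω, Y ω)) :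
    mutualInfo P X Y' ≤ mutualInfo P X Y := by
  rw [mutualInfo_eq_toReal_klMutualInfo_div_log hX hY,
    mutualInfo_eq_toReal_klMutualInfo_div_log hX hY', h]
  gcongr
  · exact klMutualInfo_ne_top _
  · exact klMutualInfo_id_parallelComp_comp_le _ κ

end MutualInformation

section ComplexGaussian

instance (v : ℝ≥0) : IsProbabilityMeasure (complexGaussian v) :=
  Measure.isProbabilityMeasure_map (by fun_prop)

lemma charFun_complexGaussian (v : ℝ≥0) (t : ℂ) :
    charFun (complexGaussian v) t = Complex.exp (-(v * ‖t‖ ^ 2 / 4)) := by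
  have inner_eq (p : ℝ × ℝ) :
      inner ℝ ((p.1 : ℂ) + p.2 * Complex.I) t = t.re * p.1 + t.im * p.2 := by
    simp [Complex.inner, mul_comm]
  have exp_inner (p : ℝ × ℝ) :
      Complex.exp ((inner ℝ ((p.1 : ℂ) + p.2 * Complex.I) t : ℝ) * Complex.I)
        = Complex.exp (t.re * p.1 * Complex.I) * Complex.exp (t.im * p.2 * Complex.I) := by
    rw [inner_eq, ← Complex.exp_add]
    push_cast
    ring_nf
  rw [charFun_apply, complexGaussian, integral_map (by fun_prop) (by fun_prop)]
  simp_rw [exp_inner]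
  rw [integral_prod_mul (fun x : ℝ ↦ Complex.exp (t.re * x * Complex.I))
    (fun y : ℝ ↦ Complex.exp (t.im * y * Complex.I)), ← charFun_apply_real, ← charFun_apply_real,
    charFun_gaussianReal, charFun_gaussianReal, ← Complex.exp_add, ← Complex.ofReal_pow ‖t‖,
    Complex.sq_norm, Complex.normSq_apply]
  congr 1
  push_cast
  ring

lemma complexGaussian_conv_complexGaussian (v w : ℝ≥0) :
    complexGaussian v ∗ complexGaussian w = complexGaussian (v + w) := by
  refine Measure.ext_of_charFun (funext fun t ↦ ?_)
  rw [charFun_conv, charFun_complexGaussian, charFun_complexGaussian, charFun_complexGaussian,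
    ← Complex.exp_add]
  congr 1
  push_cast
  ring

lemma complexGaussian_map_mul (v : ℝ≥0) (c : ℂ) :
    (complexGaussian v).map (c * ·) = complexGaussian (‖c‖₊ ^ 2 * v) := by
  have : IsProbabilityMeasure ((complexGaussian v).map (c * ·)) :=
    Measure.isProbabilityMeasure_map (by fun_prop)
  refine Measure.ext_of_charFun (funext fun t ↦ ?_)
  have inner_mul (z : ℂ) : inner ℝ (c * z) t = inner ℝ z (star c * t) := by
    rw [Complex.inner, Complex.inner, map_mul, starRingEnd_apply c]
    ring_nf
  calc charFun ((complexGaussian v).map (c * ·)) t = charFun (complexGaussian v) (star c * t) := by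
        rw [charFun_apply, charFun_apply, integral_map (by fun_prop) (by fun_prop)]
        simp_rw [inner_mul]
    _ = charFun (complexGaussian (‖c‖₊ ^ 2 * v)) t := by
        rw [charFun_complexGaussian, charFun_complexGaussian, norm_mul, norm_star]
        push_cast
        ring_nf

end ComplexGaussian

section NoiseKernel

variable {α β γ δ : Type*} [MeasurableSpace α] [MeasurableSpace β] [MeasurableSpace γ]
  [MeasurableSpace δ] {f : β × γ → δ}

lemma map_id_prod_const_comp_measure (hf : Measurable f) (μ : Measure β) [SFinite μ]
    (ν : Measure γ) [SFinite ν] :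
    (Kernel.id ×ₖ Kernel.const β ν).map f ∘ₘ μ = (μ.prod ν).map f := by
  rw [← Measure.map_comp _ _ hf, ← Measure.compProd_eq_comp_prod, Measure.compProd_const]

lemma id_parallelComp_map_id_prod_const (hf : Measurable f) (ν : Measure γ) [SFinite ν] :
    (Kernel.id : Kernel α α) ∥ₖ (Kernel.id ×ₖ Kernel.const β ν).map f =
      (Kernel.id ×ₖ Kernel.const (α × β) ν).map fun p ↦ (p.1.1, f (p.1.2, p.2)) := by
  ext1 p
  rw [Kernel.map_apply _ (by fun_prop), Kernel.parallelComp_apply, Kernel.map_apply _ hf]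
  simp only [Kernel.prod_apply, Kernel.id_apply, Kernel.const_apply, Measure.dirac_prod]
  rw [Measure.map_map (by fun_prop) (by fun_prop), Measure.map_map (by fun_prop) (by fun_prop),
    Measure.map_map (by fun_prop) (by fun_prop)]
  rfl

lemma map_prodMk_eq_id_parallelComp_comp {Ω : Type*} [MeasurableSpace Ω] {P : Measure Ω}
    [IsFiniteMeasure P] {X : Ω → α} {Z : Ω → β} {N : Ω → γ} (hX : Measurable X)
    (hZ : Measurable Z) (hN : Measurable N) (hindep : IndepFun (fun ω ↦ (X ω, Z ω)) N P)
    (hf : Measurable f) :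
    P.map (fun ω ↦ (X ω, f (Z ω, N ω))) =
      (Kernel.id ∥ₖ (Kernel.id ×ₖ Kernel.const β (P.map N)).map f) ∘ₘ
        P.map fun ω ↦ (X ω, Z ω) := by
  have law_joint : P.map (fun ω ↦ ((X ω, Z ω), N ω)) =
      (P.map fun ω ↦ (X ω, Z ω)).prod (P.map N) :=
    (indepFun_iff_map_prod_eq_prod_map_map (by fun_prop) (by fun_prop)).1 hindep
  rw [id_parallelComp_map_id_prod_const hf, map_id_prod_const_comp_measure (by fun_prop),
    ← law_joint, Measure.map_map (by fun_prop) (by fun_prop)]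
  rfl

end NoiseKernel

section AWGN

/-- The additive white Gaussian noise channel `z ↦ c * z + N` with gain `c` and complex Gaussian
noise `N` of variance `v`, as a Markov kernel from inputs to outputs. -/
noncomputable def awgnChannel (c : ℂ) (v : ℝ≥0) : Kernel ℂ ℂ :=
  (Kernel.id ×ₖ Kernel.const ℂ (complexGaussian v)).map fun p ↦ c * p.1 + p.2

instance (c : ℂ) (v : ℝ≥0) : IsMarkovKernel (awgnChannel c v) :=
  Kernel.IsMarkovKernel.map _ (by fun_prop)

lemma awgnChannel_comp_measure (c : ℂ) (v : ℝ≥0) (μ : Measure ℂ) [SFinite μ] :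
    awgnChannel c v ∘ₘ μ = μ.map (c * ·) ∗ complexGaussian v := by
  rw [awgnChannel, map_id_prod_const_comp_measure (by fun_prop), Measure.conv]
  conv_rhs => rw [← Measure.map_id (μ := complexGaussian v)]
  rw [Measure.map_prod_map _ _ (by fun_prop) (by fun_prop),
    Measure.map_map (by fun_prop) (by fun_prop)]
  rfl

lemma awgnChannel_apply (c : ℂ) (v : ℝ≥0) (z : ℂ) :
    awgnChannel c v z = Measure.dirac (c * z) ∗ complexGaussian v := by
  rw [← Measure.dirac_bind (awgnChannel c v).measurable z, awgnChannel_comp_measure,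
    Measure.map_dirac' (measurable_const_mul c)]

lemma awgnChannel_comp_awgnChannel (r c : ℂ) (v w : ℝ≥0) :
    awgnChannel r w ∘ₖ awgnChannel c v = awgnChannel (r * c) (‖r‖₊ ^ 2 * v + w) := by
  ext1 z
  have map_mul_conv (μ ν : Measure ℂ) [SFinite μ] [SFinite ν] :
      (μ ∗ ν).map (r * ·) = μ.map (r * ·) ∗ ν.map (r * ·) :=
    Measure.map_conv_addMonoidHom (AddMonoidHom.mulLeft r) (measurable_const_mul r)
  rw [Kernel.comp_apply, awgnChannel_comp_measure, awgnChannel_apply, map_mul_conv,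
    Measure.map_dirac' (measurable_const_mul r), complexGaussian_map_mul, Measure.conv_assoc,
    complexGaussian_conv_complexGaussian, ← mul_assoc, ← awgnChannel_apply]

lemma exists_awgnChannel_comp_eq {a c : ℂ} (hac : ‖a‖ ≤ ‖c‖) (v : ℝ≥0) :
    ∃ r w, awgnChannel r w ∘ₖ awgnChannel c v = awgnChannel a v := by
  have mul_eq : a / c * c = a :=
    div_mul_cancel_of_imp fun hc ↦ norm_le_zero_iff.1 (by simpa [hc] using hac)
  have norm_le_one : ‖a / c‖₊ ≤ 1 := by
    rw [nnnorm_div]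
    exact div_le_one_of_le₀ hac zero_le
  have variance_le : ‖a / c‖₊ ^ 2 * v ≤ v :=
    mul_le_of_le_one_left zero_le (pow_le_one₀ zero_le norm_le_one)
  refine ⟨a / c, v - ‖a / c‖₊ ^ 2 * v, ?_⟩
  rw [awgnChannel_comp_awgnChannel, mul_eq, add_tsub_cancel_of_le variance_le]

theorem mutualInfo_mul_add_le_of_norm_le {Ω α : Type*} [MeasurableSpace Ω] [MeasurableSpace α]
    [Finite α] [MeasurableSingletonClass α] {P : Measure Ω} [IsProbabilityMeasure P]
    {X : Ω → α} {Z N : Ω → ℂ} (hX : Measurable X) (hZ : Measurable Z) (hN : Measurable N)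
    {v : ℝ≥0} (lawN : P.map N = complexGaussian v)
    (hindep : IndepFun (fun ω ↦ (X ω, Z ω)) N P) {a c : ℂ} (hac : ‖a‖ ≤ ‖c‖) :
    mutualInfo P X (fun ω ↦ a * Z ω + N ω) ≤ mutualInfo P X fun ω ↦ c * Z ω + N ω := by
  have law_output (b : ℂ) : P.map (fun ω ↦ (X ω, b * Z ω + N ω)) =
      (Kernel.id ∥ₖ awgnChannel b v) ∘ₘ P.map fun ω ↦ (X ω, Z ω) := by
    rw [awgnChannel, ← lawN]
    exact map_prodMk_eq_id_parallelComp_comp hX hZ hN hindep (f := fun p ↦ b * p.1 + p.2)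
      (by fun_prop)
  obtain ⟨r, w, degraded⟩ := exists_awgnChannel_comp_eq hac v
  refine mutualInfo_le_of_map_prodMk_eq_comp hX (by fun_prop) (by fun_prop) (awgnChannel r w) ?_
  rw [law_output, law_output, Measure.comp_assoc, Kernel.parallelComp_comp_parallelComp,
    Kernel.id_comp, degraded]

end AWGN

theorem hm_amplify_HP_rate_general {Ω Λ α ι : Type*} [MeasurableSpace Ω] [MeasurableSpace Λ]
    [MeasurableSpace α] [Finite α] [MeasurableSingletonClass α] [Fintype ι]
    {P : Measure Ω} [IsProbabilityMeasure P] {B : Ω → Λ} (hB : Measurable B)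
    {x : ι → Λ → α} (hx : ∀ i, Measurable (x i)) {μc : Λ → ℂ} (hμc : Measurable μc)
    {N : Ω → ℂ} (hN : Measurable N) {v : ℝ≥0} (lawN : P.map N = complexGaussian v)
    (hindep : IndepFun B N P) {a c : ℂ} (hac : ‖a‖ ≤ ‖c‖) :
    ∑ i, mutualInfo P (fun ω ↦ x i (B ω)) (fun ω ↦ a * μc (B ω) + N ω) ≤
      ∑ i, mutualInfo P (fun ω ↦ x i (B ω)) (fun ω ↦ c * μc (B ω) + N ω) :=
  Finset.sum_le_sum fun i _ ↦
    mutualInfo_mul_add_le_of_norm_le ((hx i).comp hB) (hμc.comp hB) hN lawN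
      (hindep.comp ((hx i).prodMk hμc) measurable_id) hac

/-!
STATEMENT 6: Enlarging a hierarchical constellation does not decrease the high-priority BICM
rate: for every `ρ ≥ 1` and noise variance `σ_H² > 0`,
`∑ i, I(B_H^i ; ρZ + N_H) ≥ ∑ i, I(B_H^i ; Z + N_H)`.
-/
theorem hm_amplify_HP_rate
    {Ω : Type*} [MeasurableSpace Ω] (P : Measure Ω) [IsProbabilityMeasure P]
    (mH mL : ℕ) (hmH : 0 < mH) (hmL : 0 < mL)
    (μc : (Fin mH → Bool) × (Fin mL → Bool) → ℂ)
    (BH : Ω → Fin mH → Bool) (BL : Ω → Fin mL → Bool)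
    (hBH : Measurable BH) (hBL : Measurable BL)
    (hUnif : P.map (fun ω => (BH ω, BL ω)) =
      (PMF.uniformOfFintype ((Fin mH → Bool) × (Fin mL → Bool))).toMeasure)
    (σH2 : ℝ≥0) (hσH2 : 0 < σH2)
    (NH : Ω → ℂ) (hNHMeas : Measurable NH)
    (lawNH : P.map NH = complexGaussian σH2)
    (hIndepNH : IndepFun (fun ω => (BH ω, BL ω)) NH P)
    (ρ : ℝ) (hρ : 1 ≤ ρ) :
    ∑ i : Fin mH,
        mutualInfo P (fun ω => BH ω i) (fun ω => (ρ : ℂ) * μc (BH ω, BL ω) + NH ω) ≥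
      ∑ i : Fin mH,
        mutualInfo P (fun ω => BH ω i) (fun ω => μc (BH ω, BL ω) + NH ω) := by
  simpa using hm_amplify_HP_rate_general (hBH.prodMk hBL) (x := fun i l ↦ l.1 i)
    (fun _ ↦ .of_discrete) (.of_discrete (f := μc)) hNHMeas lawNH hIndepNH
    (a := 1) (c := ρ) (by simpa using hρ.trans (le_abs_self ρ))
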